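/- Let α ∈ (0,1) and let U : ℝ → ℝ be strictly increasing and continuous. If the Tail Quasi-Linear Mean ρ_U^α is both translation invariant (ρ_U^α(X+m) = ρ_U^α(X)+m for all m ∈ ℝ) and positively homogeneous (ρ_U^α(λX) = λρ_U^α(X) for all λ > 0) on all integrable random variables with continuous distribution functions, then ρ_U^α coincides with the Conditional Tail Expectation: ρ_U^α(X) = CTE_α(X) for all such X. -/

import Mathlib

open MeasureTheory Real Set

/-- Value at Risk at level `α`: `VaR_α(X) = inf {x | F_X(x) ≥ α}`. -/
noncomputable def VaR {Ω : Type*} [MeasurableSpace Ω] (P : Measure Ω) (X : Ω → ℝ) (α : ℝ) : ℝ :=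
  sInf {x : ℝ | α ≤ (P {ω | X ω ≤ x}).toReal}

/-- The cumulative distribution function of `X` under `P`. -/
noncomputable def cdfR {Ω : Type*} [MeasurableSpace Ω] (P : Measure Ω) (X : Ω → ℝ) (x : ℝ) : ℝ :=
  (P {ω | X ω ≤ x}).toReal

/-- Conditional expectation of `f` given the event `A`: `E[f | A]`. -/
noncomputable def condExpOn {Ω : Type*} [MeasurableSpace Ω] (P : Measure Ω) (f : Ω → ℝ)
    (A : Set Ω) : ℝ :=
  (∫ ω in A, f ω ∂P) / (P A).toReal

/-- The tail event `{X ≥ VaR_α(X)}`. -/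
def tailEvent {Ω : Type*} [MeasurableSpace Ω] (P : Measure Ω) (X : Ω → ℝ) (α : ℝ) : Set Ω :=
  {ω | VaR P X α ≤ X ω}

/-- Generalized inverse `U⁻¹(y) = inf {x | U(x) ≥ y}`. -/
noncomputable def ginv (U : ℝ → ℝ) (y : ℝ) : ℝ := sInf {x : ℝ | y ≤ U x}

/-- Tail Quasi-Linear Mean `ρ_U^α(X) = U⁻¹(E[U(X) | X ≥ VaR_α(X)])`. -/
noncomputable def TQLM {Ω : Type*} [MeasurableSpace Ω] (P : Measure Ω) (X : Ω → ℝ) (α : ℝ)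
    (U : ℝ → ℝ) : ℝ :=
  ginv U (condExpOn P (fun ω => U (X ω)) (tailEvent P X α))

/-- Conditional Tail Expectation `CTE_α(X) = E[X | X ≥ VaR_α(X)]`. -/
noncomputable def CTE {Ω : Type*} [MeasurableSpace Ω] (P : Measure Ω) (X : Ω → ℝ) (α : ℝ) : ℝ :=
  condExpOn P X (tailEvent P X α)

/-- Tail Conditional Entropic Risk Measure `ρ_γ^α(X) = (1/γ) log E[e^{γX} | X ≥ VaR_α(X)]`. -/
noncomputable def TCERM {Ω : Type*} [MeasurableSpace Ω] (P : Measure Ω) (X : Ω → ℝ) (α : ℝ)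
    (γ : ℝ) : ℝ :=
  (1 / γ) * Real.log (condExpOn P (fun ω => Real.exp (γ * X ω)) (tailEvent P X α))

/-!
Translation invariance and positive homogeneity give `ρ(λY + m) = λ ρ(Y) + m`, that is
`U (λ ρ(Y) + m) = E[U (λY + m) | tail]` for bounded `Y`. Let `Y` approach the indicator of an upper
part of the tail whose conditional probability `p` is chosen so that `ρ(Y) → 1 / 2`. In the limit,
`U ((x + y) / 2) = (1 - p) U x + p U y` for all `x < y`. Hence consecutive increments of `U` on an
equally spaced grid have the constant ratio `(1 - p) / p`, whatever the mesh; comparing two meshes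
forces `p = 1 / 2`. So `U` is midpoint-affine and continuous, hence affine, and an affine `U`
commutes with the conditional expectation.
-/

open Filter Topology ProbabilityTheory

section CumulativeDistribution

variable {Ω : Type*} [MeasurableSpace Ω] {P : Measure Ω} [IsProbabilityMeasure P] {X : Ω → ℝ}

theorem cdfR_eq_cdf_map (hX : Measurable X) : cdfR P X = cdf (P.map X) := by
  have := Measure.isProbabilityMeasure_map (μ := P) hX.aemeasurable
  ext x
  rw [cdf_eq_real, map_measureReal_apply hX measurableSet_Iic]
  rfl

theorem continuous_cdfR_iff (hX : Measurable X) :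
    Continuous (cdfR P X) ↔ NullSingletonClass (P.map X) := by
  have := Measure.isProbabilityMeasure_map (μ := P) hX.aemeasurable
  set F := cdf (P.map X)
  have hF : ∀ x, ContinuousAt F x ↔ P.map X {x} = 0 := fun x => by
    rw [F.mono.continuousAt_iff_leftLim_eq_rightLim, F.rightLim_eq, ← measure_cdf (P.map X),
      StieltjesFunction.measure_singleton, ENNReal.ofReal_eq_zero, sub_nonpos]
    exact ⟨fun h => h.ge, fun h => (F.mono.leftLim_le le_rfl).antisymm h⟩
  simp only [cdfR_eq_cdf_map hX, continuous_iff_continuousAt]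
  exact ⟨fun h => ⟨fun x => (hF x).1 (h x)⟩, fun h x => (hF x).2 (h.measure_singleton x)⟩

theorem measureReal_setOf_ge (hX : Measurable X) (hc : Continuous (cdfR P X)) (s : ℝ) :
    P.real {ω | s ≤ X ω} = 1 - cdfR P X s := by
  have := Measure.isProbabilityMeasure_map (μ := P) hX.aemeasurable
  have := (continuous_cdfR_iff hX).1 hc
  calc P.real {ω | s ≤ X ω} = (P.map X).real (Ici s) :=
        (map_measureReal_apply hX measurableSet_Ici).symm
    _ = (P.map X).real (Iic s)ᶜ := by rw [compl_Iic, measureReal_congr Ioi_ae_eq_Ici]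
    _ = 1 - cdfR P X s := by
        rw [probReal_compl_eq_one_sub measurableSet_Iic, cdfR_eq_cdf_map hX, cdf_eq_real]

theorem cdfR_VaR (hX : Measurable X) (hc : Continuous (cdfR P X)) {α : ℝ}
    (hα : α ∈ Ioo (0 : ℝ) 1) : cdfR P X (VaR P X α) = α := by
  have hmono : Monotone (cdfR P X) := by rw [cdfR_eq_cdf_map hX]; exact monotone_cdf _
  obtain ⟨a, ha⟩ : ∃ a, cdfR P X a < α := by
    rw [cdfR_eq_cdf_map hX]
    exact ((tendsto_cdf_atBot _).eventually (gt_mem_nhds hα.1)).exists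
  obtain ⟨b, hb⟩ : ∃ b, α < cdfR P X b := by
    rw [cdfR_eq_cdf_map hX]
    exact ((tendsto_cdf_atTop _).eventually (lt_mem_nhds hα.2)).exists
  obtain ⟨x, hx⟩ : ∃ x, cdfR P X x = α :=
    mem_range_of_exists_le_of_exists_ge hc ⟨a, ha.le⟩ ⟨b, hb.le⟩
  have hbdd : BddBelow {y | α ≤ cdfR P X y} :=
    ⟨a, fun y hy => (hmono.reflect_lt (ha.trans_le hy)).le⟩
  refine le_antisymm ?_ ?_
  · exact (hmono (csInf_le hbdd hx.ge)).trans hx.le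
  · exact (isClosed_le continuous_const hc).csInf_mem ⟨x, hx.ge⟩ hbdd

theorem measureReal_tailEvent (hX : Measurable X) (hc : Continuous (cdfR P X)) {α : ℝ}
    (hα : α ∈ Ioo (0 : ℝ) 1) : P.real (tailEvent P X α) = 1 - α := by
  rw [tailEvent, measureReal_setOf_ge hX hc, cdfR_VaR hX hc hα]

theorem measure_tailEvent_ne_zero (hX : Measurable X) (hc : Continuous (cdfR P X)) {α : ℝ}
    (hα : α ∈ Ioo (0 : ℝ) 1) : P (tailEvent P X α) ≠ 0 := by
  rw [← measureReal_ne_zero_iff, measureReal_tailEvent hX hc hα]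
  exact (sub_pos.2 hα.2).ne'

theorem continuous_cdfR_comp (hX : Measurable X) (hc : Continuous (cdfR P X)) {g : ℝ → ℝ}
    (hg : Measurable g) (hinj : g.Injective) : Continuous (cdfR P fun ω => g (X ω)) := by
  have := (continuous_cdfR_iff hX).1 hc
  refine (continuous_cdfR_iff (hg.comp hX)).2 ⟨fun y => ?_⟩
  rw [← Measure.map_map hg hX, Measure.map_apply hg (measurableSet_singleton y)]
  exact (subsingleton_singleton.preimage hinj).measure_zero _

theorem continuous_cdfR_of_absolutelyContinuous {Q : Measure Ω} [IsProbabilityMeasure Q]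
    (hQP : Q ≪ P) (hX : Measurable X) (hc : Continuous (cdfR P X)) : Continuous (cdfR Q X) := by
  have := (continuous_cdfR_iff hX).1 hc
  exact (continuous_cdfR_iff hX).2 ⟨fun x => (hQP.map hX) (measure_singleton x)⟩

theorem tailEvent_comp_ae_eq (hX : Measurable X) (hc : Continuous (cdfR P X)) {α : ℝ}
    (hα : α ∈ Ioo (0 : ℝ) 1) {g : ℝ → ℝ} (hg : StrictMono g) :
    tailEvent P (fun ω => g (X ω)) α =ᵐ[P] tailEvent P X α := by
  have hgX : Measurable fun ω => g (X ω) := hg.monotone.measurable.comp hX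
  have hmeas : MeasurableSet (tailEvent P X α) := hX measurableSet_Ici
  have hmeas_comp : MeasurableSet (tailEvent P (fun ω => g (X ω)) α) := hgX measurableSet_Ici
  have heq : P (tailEvent P X α) = P (tailEvent P (fun ω => g (X ω)) α) := by
    rw [← measureReal_eq_measureReal_iff, measureReal_tailEvent hX hc hα, measureReal_tailEvent hgX
      (continuous_cdfR_comp hX hc hg.monotone.measurable hg.injective) hα]
  -- The two tail events are nested and both have probability `1 - α`.
  rcases le_or_gt (VaR P (fun ω => g (X ω)) α) (g (VaR P X α)) with hle | hlt
  · exact (ae_eq_of_subset_of_measure_ge (fun ω hω => hle.trans (hg.monotone hω)) heq.ge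
      hmeas.nullMeasurableSet (measure_ne_top _ _)).symm
  · exact ae_eq_of_subset_of_measure_ge (fun ω hω => (hg.lt_iff_lt.1 (hlt.trans_le hω)).le) heq.le
      hmeas_comp.nullMeasurableSet (measure_ne_top _ _)

theorem cond_tailEvent_comp (hX : Measurable X) (hc : Continuous (cdfR P X)) {α : ℝ}
    (hα : α ∈ Ioo (0 : ℝ) 1) {g : ℝ → ℝ} (hg : StrictMono g) :
    P[|tailEvent P (fun ω => g (X ω)) α] = P[|tailEvent P X α] := by
  have h := tailEvent_comp_ae_eq hX hc hα hg
  rw [ProbabilityTheory.cond, ProbabilityTheory.cond, measure_congr h, Measure.restrict_congr_set h]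

end CumulativeDistribution

section QuasiLinearMean

variable {Ω : Type*} [MeasurableSpace Ω] {P : Measure Ω} {X : Ω → ℝ} {U : ℝ → ℝ}

theorem condExpOn_eq_integral_cond (f : Ω → ℝ) (A : Set Ω) :
    condExpOn P f A = ∫ ω, f ω ∂P[|A] := by
  rw [condExpOn, ProbabilityTheory.cond, integral_smul_measure, ENNReal.toReal_inv, smul_eq_mul,
    div_eq_inv_mul]

theorem integrable_cond {f : Ω → ℝ} (hf : Integrable f P) {A : Set Ω} (hA : P A ≠ 0) :
    Integrable f P[|A] :=
  hf.restrict.smul_measure (ENNReal.inv_ne_top.2 hA)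

theorem ginv_apply (hU : StrictMono U) (x : ℝ) : ginv U (U x) = x := by
  simp only [ginv, hU.le_iff_le]
  exact csInf_Ici

theorem apply_TQLM [IsFiniteMeasure P] (hU : StrictMono U) (hUc : Continuous U)
    (hUX : Integrable (fun ω => U (X ω)) P) {α : ℝ} (hT : P (tailEvent P X α) ≠ 0) :
    U (TQLM P X α U) = ∫ ω, U (X ω) ∂P[|tailEvent P X α] := by
  have := cond_isProbabilityMeasure hT
  have hint := integrable_cond hUX hT
  obtain ⟨ω₁, hω₁⟩ := exists_le_integral hint
  obtain ⟨ω₂, hω₂⟩ := exists_integral_le hint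
  obtain ⟨x, hx⟩ := mem_range_of_exists_le_of_exists_ge hUc ⟨_, hω₁⟩ ⟨_, hω₂⟩
  rw [TQLM, condExpOn_eq_integral_cond, ← hx, ginv_apply hU]

theorem TQLM_mul_add_eq_CTE [IsFiniteMeasure P] (hX : Integrable X P) {α : ℝ}
    (hT : P (tailEvent P X α) ≠ 0) {a : ℝ} (ha : 0 < a) (b : ℝ) :
    TQLM P X α (fun x => a * x + b) = CTE P X α := by
  have := cond_isProbabilityMeasure hT
  have hmean : ∫ ω, (a * X ω + b) ∂P[|tailEvent P X α] = a * CTE P X α + b := by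
    rw [integral_add ((integrable_cond hX hT).const_mul a) (integrable_const b),
      integral_const_mul, integral_const, probReal_univ, one_smul, CTE, condExpOn_eq_integral_cond]
  rw [TQLM, condExpOn_eq_integral_cond, hmean]
  exact ginv_apply ((strictMono_id.const_mul ha).add_const b) _

end QuasiLinearMean

section BoundedDiffuse

/-- The random variable `X` is bounded and its law is diffuse, i.e. it has a continuous cumulative
distribution function. Boundedness is everywhere, not just almost surely. -/
structure IsBoundedDiffuse {Ω : Type*} [MeasurableSpace Ω] (P : Measure Ω) (X : Ω → ℝ) : Prop where
  measurable : Measurable X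
  exists_abs_le : ∃ C, ∀ ω, |X ω| ≤ C
  continuous_cdfR : Continuous (cdfR P X)

variable {Ω : Type*} [MeasurableSpace Ω] {P : Measure Ω} {X : Ω → ℝ}

theorem IsBoundedDiffuse.integrable_comp [IsFiniteMeasure P] (hX : IsBoundedDiffuse P X)
    {U : ℝ → ℝ} (hU : Monotone U) : Integrable (fun ω => U (X ω)) P := by
  obtain ⟨C, hC⟩ := hX.exists_abs_le
  exact Integrable.of_mem_Icc (U (-C)) (U C) (hU.measurable.comp hX.measurable).aemeasurable
    (ae_of_all _ fun ω => ⟨hU (abs_le.1 (hC ω)).1, hU (abs_le.1 (hC ω)).2⟩)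

theorem IsBoundedDiffuse.const_mul [IsProbabilityMeasure P] (hX : IsBoundedDiffuse P X) {c : ℝ}
    (hc : c ≠ 0) : IsBoundedDiffuse P fun ω => c * X ω where
  measurable := hX.measurable.const_mul c
  exists_abs_le := by
    obtain ⟨C, hC⟩ := hX.exists_abs_le
    exact ⟨|c| * C, fun ω => by rw [abs_mul]; gcongr; exact hC ω⟩
  continuous_cdfR := continuous_cdfR_comp hX.measurable hX.continuous_cdfR
    (measurable_id.const_mul c) (mul_right_injective₀ hc)

theorem IsBoundedDiffuse.add_const [IsProbabilityMeasure P] (hX : IsBoundedDiffuse P X) (c : ℝ) :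
    IsBoundedDiffuse P fun ω => X ω + c where
  measurable := hX.measurable.add_const c
  exists_abs_le := by
    obtain ⟨C, hC⟩ := hX.exists_abs_le
    exact ⟨C + |c|, fun ω => (abs_add_le _ _).trans (by gcongr; exact hC ω)⟩
  continuous_cdfR := continuous_cdfR_comp hX.measurable hX.continuous_cdfR
    (measurable_id.add_const c) (add_left_injective c)

end BoundedDiffuse

section PerturbedStep

/-- The unit step at `s`, perturbed by `ε * arctan`: for `ε > 0` it is strictly increasing, so that
composition with it preserves continuity of distribution functions. -/
noncomputable def perturbedStep (s ε x : ℝ) : ℝ := (Ici s).indicator 1 x + ε * arctan x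

theorem perturbedStep_zero (s x : ℝ) : perturbedStep s 0 x = (Ici s).indicator 1 x := by
  rw [perturbedStep, zero_mul, add_zero]

theorem strictMono_perturbedStep (s : ℝ) {ε : ℝ} (hε : 0 < ε) : StrictMono (perturbedStep s ε) := by
  have hstep : Monotone ((Ici s).indicator (1 : ℝ → ℝ)) := fun x y hxy => by
    by_cases hx : x ∈ Ici s
    · have hy : y ∈ Ici s := le_trans hx hxy
      rw [indicator_of_mem hx, indicator_of_mem hy, Pi.one_apply, Pi.one_apply]
    · rw [indicator_of_notMem hx]
      exact indicator_nonneg (fun _ _ => zero_le_one) y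
  exact hstep.add_strictMono (arctan_strictMono.const_mul hε)

theorem measurable_perturbedStep (s ε : ℝ) : Measurable (perturbedStep s ε) :=
  (measurable_one.indicator measurableSet_Ici).add (measurable_arctan.const_mul ε)

theorem abs_perturbedStep_le (s : ℝ) {ε : ℝ} (hε : |ε| ≤ 1) (x : ℝ) :
    |perturbedStep s ε x| ≤ 3 := by
  have hstep : |(Ici s).indicator (1 : ℝ → ℝ) x| ≤ 1 := by
    rw [← Real.norm_eq_abs]
    exact (norm_indicator_le_norm_self _ _).trans norm_one.le
  have harctan : |arctan x| ≤ 2 := abs_le.2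
    ⟨by linarith [neg_pi_div_two_lt_arctan x, pi_le_four],
      by linarith [arctan_lt_pi_div_two x, pi_le_four]⟩
  calc |perturbedStep s ε x| ≤ |(Ici s).indicator 1 x| + |ε| * |arctan x| := by
        rw [← abs_mul]; exact abs_add_le _ _
    _ ≤ 1 + 1 * 2 := by gcongr
    _ = 3 := by norm_num

variable {Ω : Type*} [MeasurableSpace Ω] {Q : Measure Ω} [IsProbabilityMeasure Q]

theorem integral_comp_indicator_one {A : Set Ω} (hA : MeasurableSet A) (f : ℝ → ℝ) :
    ∫ ω, f (A.indicator 1 ω) ∂Q = (1 - Q.real A) * f 0 + Q.real A * f 1 := by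
  have hsplit : (fun ω => f (A.indicator 1 ω)) =
      fun ω => A.indicator (fun _ => f 1 - f 0) ω + f 0 := by
    ext ω
    by_cases hω : ω ∈ A <;> simp [hω]
  rw [hsplit, integral_add ((integrable_const _).indicator hA) (integrable_const _),
    integral_indicator_const _ hA, integral_const, probReal_univ, smul_eq_mul, one_smul]
  ring

theorem tendsto_integral_comp_perturbedStep {X : Ω → ℝ} (hX : Measurable X) {f : ℝ → ℝ}
    (hf : Continuous f) (s : ℝ) :
    Tendsto (fun ε => ∫ ω, f (perturbedStep s ε (X ω)) ∂Q) (𝓝 0)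
      (𝓝 ((1 - Q.real {ω | s ≤ X ω}) * f 0 + Q.real {ω | s ≤ X ω} * f 1)) := by
  rw [← integral_comp_indicator_one (Q := Q) (measurableSet_le measurable_const hX) f]
  obtain ⟨C, hC⟩ := (isCompact_Icc (a := (-3 : ℝ)) (b := 3)).exists_bound_of_continuousOn
    hf.continuousOn
  refine tendsto_integral_filter_of_dominated_convergence (fun _ => C) ?_ ?_ (integrable_const C) ?_
  · exact .of_forall fun ε =>
      (hf.measurable.comp ((measurable_perturbedStep s ε).comp hX)).aestronglyMeasurable
  · filter_upwards [Metric.closedBall_mem_nhds (0 : ℝ) one_pos] with ε hε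
    have hε1 : |ε| ≤ 1 := by simpa using hε
    exact ae_of_all _ fun ω => hC _ (abs_le.1 (abs_perturbedStep_le s hε1 (X ω)))
  · refine ae_of_all _ fun ω => (hf.tendsto _).comp ?_
    have hcont : Continuous fun ε => perturbedStep s ε (X ω) :=
      continuous_const.add (continuous_id.mul continuous_const)
    have hlim := hcont.tendsto 0
    rwa [perturbedStep_zero] at hlim

end PerturbedStep

section MidpointEquation

variable {f : ℝ → ℝ} {p : ℝ}

theorem eq_half_of_weighted_midpoint (hf : f.Injective)
    (h : ∀ x y, x < y → f ((x + y) / 2) = (1 - p) * f x + p * f y) : p = 1 / 2 := by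
  have hmesh1 : ∀ x, (1 - p) * (f (x + 1) - f x) = p * (f (x + 2) - f (x + 1)) := fun x => by
    have hx := h x (x + 2) (by linarith)
    rw [show (x + (x + 2)) / 2 = x + 1 by ring] at hx
    linear_combination hx
  have hmesh2 : (1 - p) * (f 2 - f 0) = p * (f 4 - f 2) := by
    have h04 := h 0 4 (by norm_num)
    rw [show ((0 : ℝ) + 4) / 2 = 2 by norm_num] at h04
    linear_combination h04
  have h012 := hmesh1 0
  have h123 := hmesh1 1
  have h234 := hmesh1 2
  norm_num at h012 h123 h234
  have hp : p ≠ 0 := by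
    rintro rfl
    exact absurd (hf (show f 1 = f 0 by linarith)) one_ne_zero
  have hperiod : f 2 - f 1 = f 4 - f 3 :=
    mul_left_cancel₀ hp (by linear_combination hmesh2 - h012 - h123)
  have hprod : (1 - 2 * p) * (f 2 - f 1) = 0 := by
    linear_combination (1 - p) * h123 + p * h234 - p ^ 2 * hperiod
  have hne : f 2 - f 1 ≠ 0 := sub_ne_zero.2 (hf.ne (by norm_num))
  linarith [(mul_eq_zero.1 hprod).resolve_right hne]

theorem map_midpoint_of_weighted_midpoint (hf : f.Injective)
    (h : ∀ x y, x < y → f ((x + y) / 2) = (1 - p) * f x + p * f y) (x y : ℝ) :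
    f (midpoint ℝ x y) = midpoint ℝ (f x) (f y) := by
  obtain rfl := eq_half_of_weighted_midpoint hf h
  wlog hxy : x < y generalizing x y
  · rcases (not_lt.1 hxy).eq_or_lt with rfl | hyx
    · rw [midpoint_self, midpoint_self]
    · rw [midpoint_comm, this y x hyx, midpoint_comm]
  rw [midpoint_eq_smul_add, midpoint_eq_smul_add, invOf_eq_inv, smul_eq_mul, smul_eq_mul,
    inv_mul_eq_div, h x y hxy]
  ring

theorem exists_eq_mul_add_of_map_midpoint (hf : Continuous f)
    (h : ∀ x y, f (midpoint ℝ x y) = midpoint ℝ (f x) (f y)) :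
    ∃ a b, f = fun x => a * x + b := by
  let L : ℝ →ᵃ[ℝ] ℝ := AffineMap.ofMapMidpoint f h hf
  refine ⟨L.linear 1, f 0, funext fun x => ?_⟩
  calc f x = L.linear x + f 0 := congrFun L.decomp x
    _ = L.linear 1 * x + f 0 := by
        rw [mul_comm, ← smul_eq_mul x, ← map_smul, smul_eq_mul, mul_one]

end MidpointEquation

section Equivariance

/-- Translation invariance of the risk measure `ρ` on the class `𝒳` of random variables. -/
def TranslationInvariantOn {Ω : Type*} (ρ : (Ω → ℝ) → ℝ) (𝒳 : Set (Ω → ℝ)) : Prop :=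
  ∀ X ∈ 𝒳, ∀ m : ℝ, ρ (fun ω => X ω + m) = ρ X + m

/-- Positive homogeneity of the risk measure `ρ` on the class `𝒳` of random variables. -/
def PosHomogeneousOn {Ω : Type*} (ρ : (Ω → ℝ) → ℝ) (𝒳 : Set (Ω → ℝ)) : Prop :=
  ∀ X ∈ 𝒳, ∀ c : ℝ, 0 < c → ρ (fun ω => c * X ω) = c * ρ X

variable {Ω : Type*} [MeasurableSpace Ω] {P : Measure Ω} [IsProbabilityMeasure P]
  {α : ℝ} {U : ℝ → ℝ}

theorem apply_mul_TQLM_add (hα : α ∈ Ioo (0 : ℝ) 1) (hU : StrictMono U) (hUc : Continuous U)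
    (hTI : TranslationInvariantOn (TQLM P · α U) {X | IsBoundedDiffuse P X})
    (hPH : PosHomogeneousOn (TQLM P · α U) {X | IsBoundedDiffuse P X})
    {Y : Ω → ℝ} (hY : IsBoundedDiffuse P Y) {c : ℝ} (hc : 0 < c) (m : ℝ) :
    U (c * TQLM P Y α U + m) = ∫ ω, U (c * Y ω + m) ∂P[|tailEvent P Y α] := by
  have hg : StrictMono fun x => c * x + m := (strictMono_mul_left_of_pos hc).add_const m
  have hcY : IsBoundedDiffuse P fun ω => c * Y ω := hY.const_mul hc.ne'
  have hcYm : IsBoundedDiffuse P fun ω => c * Y ω + m := hcY.add_const m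
  have hequiv : TQLM P (fun ω => c * Y ω + m) α U = c * TQLM P Y α U + m :=
    (hTI _ hcY m).trans (congrArg (· + m) (hPH Y hY c hc))
  rw [← hequiv, apply_TQLM hU hUc (hcYm.integrable_comp hU.monotone)
      (measure_tailEvent_ne_zero hcYm.measurable hcYm.continuous_cdfR hα),
    cond_tailEvent_comp hY.measurable hY.continuous_cdfR hα hg]

theorem isBoundedDiffuse_perturbedStep {X : Ω → ℝ} (hX : Measurable X)
    (hc : Continuous (cdfR P X)) (s : ℝ) {ε : ℝ} (hε : ε ∈ Ioc (0 : ℝ) 1) :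
    IsBoundedDiffuse P fun ω => perturbedStep s ε (X ω) where
  measurable := (measurable_perturbedStep s ε).comp hX
  exists_abs_le := ⟨3, fun ω => abs_perturbedStep_le s ((abs_of_pos hε.1).trans_le hε.2) (X ω)⟩
  continuous_cdfR := continuous_cdfR_comp hX hc (measurable_perturbedStep s ε)
    (strictMono_perturbedStep s hε.1).injective

theorem tendsto_apply_mul_TQLM_perturbedStep_add (hα : α ∈ Ioo (0 : ℝ) 1) (hU : StrictMono U)
    (hUc : Continuous U)
    (hTI : TranslationInvariantOn (TQLM P · α U) {X | IsBoundedDiffuse P X})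
    (hPH : PosHomogeneousOn (TQLM P · α U) {X | IsBoundedDiffuse P X})
    {X : Ω → ℝ} (hX : Measurable X) (hXc : Continuous (cdfR P X)) (s : ℝ)
    {c : ℝ} (hc : 0 < c) (m : ℝ) :
    Tendsto (fun ε => U (c * TQLM P (fun ω => perturbedStep s ε (X ω)) α U + m)) (𝓝[>] 0)
      (𝓝 ((1 - P[|tailEvent P X α].real {ω | s ≤ X ω}) * U m +
        P[|tailEvent P X α].real {ω | s ≤ X ω} * U (c + m))) := by
  have := cond_isProbabilityMeasure (measure_tailEvent_ne_zero hX hXc hα)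
  have hlim := (tendsto_integral_comp_perturbedStep (Q := P[|tailEvent P X α]) hX
    (hUc.comp ((continuous_const_mul c).add_const m)) s).mono_left (nhdsWithin_le_nhds (s := Ioi 0))
  simp only [Function.comp_apply, mul_zero, zero_add, mul_one] at hlim
  refine hlim.congr' ?_
  filter_upwards [Ioc_mem_nhdsGT one_pos] with ε hε
  rw [apply_mul_TQLM_add hα hU hUc hTI hPH (isBoundedDiffuse_perturbedStep hX hXc s hε) hc m,
    cond_tailEvent_comp hX hXc hα (strictMono_perturbedStep s hε.1)]

theorem exists_weighted_midpoint (hα : α ∈ Ioo (0 : ℝ) 1) (hU : StrictMono U) (hUc : Continuous U)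
    (hTI : TranslationInvariantOn (TQLM P · α U) {X | IsBoundedDiffuse P X})
    (hPH : PosHomogeneousOn (TQLM P · α U) {X | IsBoundedDiffuse P X})
    {X : Ω → ℝ} (hX : Measurable X) (hc : Continuous (cdfR P X)) :
    ∃ p : ℝ, ∀ x y, x < y → U ((x + y) / 2) = (1 - p) * U x + p * U y := by
  have := cond_isProbabilityMeasure (measure_tailEvent_ne_zero hX hc hα)
  have hcQ := continuous_cdfR_of_absolutelyContinuous
    (cond_absolutelyContinuous (s := tailEvent P X α)) hX hc
  obtain ⟨p, hp, hp_half⟩ : ∃ p ∈ Ioo (0 : ℝ) 1, (1 - p) * U 0 + p * U 1 = U (1 / 2) := by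
    have hmem : U (1 / 2) ∈ openSegment ℝ (U 0) (U 1) := by
      rw [openSegment_eq_Ioo (hU one_pos)]
      exact ⟨hU one_half_pos, hU one_half_lt_one⟩
    obtain ⟨q, p, hq, hp, hqp, heq⟩ := hmem
    obtain rfl : q = 1 - p := eq_sub_of_add_eq hqp
    exact ⟨p, ⟨hp, sub_pos.1 hq⟩, heq⟩
  let s := VaR P[|tailEvent P X α] X (1 - p)
  have hs : P[|tailEvent P X α].real {ω | s ≤ X ω} = p :=
    (measureReal_tailEvent hX hcQ ⟨sub_pos.2 hp.2, sub_lt_self 1 hp.1⟩).trans (sub_sub_cancel 1 p)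
  have hlim : ∀ c : ℝ, 0 < c → ∀ m : ℝ, Tendsto
      (fun ε => U (c * TQLM P (fun ω => perturbedStep s ε (X ω)) α U + m)) (𝓝[>] 0)
      (𝓝 ((1 - p) * U m + p * U (c + m))) := fun c hc0 m =>
    hs ▸ tendsto_apply_mul_TQLM_perturbedStep_add hα hU hUc hTI hPH hX hc s hc0 m
  have hhalf : Tendsto (fun ε => TQLM P (fun ω => perturbedStep s ε (X ω)) α U) (𝓝[>] 0)
      (𝓝 (1 / 2)) := by
    have hemb : IsEmbedding U :=
      hU.isEmbedding_of_ordConnected (isPreconnected_range hUc).ordConnected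
    rw [hemb.tendsto_nhds_iff, ← hp_half]
    simpa only [Function.comp_def, one_mul, add_zero] using hlim 1 one_pos 0
  refine ⟨p, fun x y hxy => ?_⟩
  have hmid := (hUc.tendsto _).comp ((hhalf.const_mul (y - x)).add_const x)
  have heq := tendsto_nhds_unique hmid (hlim (y - x) (sub_pos.2 hxy) x)
  rwa [sub_add_cancel, show (y - x) * (1 / 2) + x = (x + y) / 2 by ring] at heq

end Equivariance

theorem TQLM_eq_CTE_of_translation_invariant_and_posHom_general
    {Ω : Type*} [MeasurableSpace Ω] (P : Measure Ω) [IsProbabilityMeasure P]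
    (α : ℝ) (hα : α ∈ Ioo (0 : ℝ) 1) (U : ℝ → ℝ) (hU : StrictMono U) (hUc : Continuous U)
    (hTI : TranslationInvariantOn (TQLM P · α U) {X | IsBoundedDiffuse P X})
    (hPH : PosHomogeneousOn (TQLM P · α U) {X | IsBoundedDiffuse P X})
    (X : Ω → ℝ) (hX : Measurable X) (hXi : Integrable X P) (hc : Continuous (cdfR P X)) :
    TQLM P X α U = CTE P X α := by
  obtain ⟨p, hp⟩ := exists_weighted_midpoint hα hU hUc hTI hPH hX hc
  obtain ⟨a, b, rfl⟩ :=
    exists_eq_mul_add_of_map_midpoint hUc (map_midpoint_of_weighted_midpoint hU.injective hp)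
  have ha : 0 < a := by simpa using hU one_pos
  exact TQLM_mul_add_eq_CTE hXi (measure_tailEvent_ne_zero hX hc hα) ha b

/-- If the TQLM `ρ_U^α` is translation invariant and positively
homogeneous on all integrable random variables with continuous distribution
functions, then it coincides with the Conditional Tail Expectation. -/
theorem TQLM_eq_CTE_of_translation_invariant_and_posHom
    {Ω : Type*} [MeasurableSpace Ω] (P : Measure Ω) [IsProbabilityMeasure P]
    (α : ℝ) (hα : α ∈ Set.Ioo (0:ℝ) 1)
    (U : ℝ → ℝ) (hU : StrictMono U) (hUc : Continuous U)
    (hTI : ∀ X : Ω → ℝ, Measurable X → Integrable X P → Continuous (cdfR P X) →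
      Integrable (fun ω => U (X ω)) P → ∀ m : ℝ,
      TQLM P (fun ω => X ω + m) α U = TQLM P X α U + m)
    (hPH : ∀ X : Ω → ℝ, Measurable X → Integrable X P → Continuous (cdfR P X) →
      Integrable (fun ω => U (X ω)) P → ∀ lam : ℝ, 0 < lam →
      TQLM P (fun ω => lam * X ω) α U = lam * TQLM P X α U) :
    ∀ X : Ω → ℝ, Measurable X → Integrable X P → Continuous (cdfR P X) →
      Integrable (fun ω => U (X ω)) P →
      TQLM P X α U = CTE P X α :=
  fun X hX hXi hc _ => TQLM_eq_CTE_of_translation_invariant_and_posHom_general P α hα U hU hUc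
    (fun Y hY => hTI Y hY.measurable (hY.integrable_comp monotone_id) hY.continuous_cdfR
      (hY.integrable_comp hU.monotone))
    (fun Y hY => hPH Y hY.measurable (hY.integrable_comp monotone_id) hY.continuous_cdfR
      (hY.integrable_comp hU.monotone)) X hX hXi hc
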